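/- For all A, B ∈ A the following equality holds in DH(R): E_A ⋆ E_B = v^{⟨A,B⟩} Σ_C (|Ext¹_R(A,B)_C| / |Hom_R(A,B)|) · E_C, where the sum runs over isomorphism classes C and Ext¹_R(A,B)_C denotes the set of extension classes of A by B with middle term isomorphic to C. -/

import Mathlib

open CategoryTheory CategoryTheory.Limits Opposite

noncomputable section

universe u

variable (k : Type) [Field k] [Fintype k]
variable (R : Type u) [SmallCategory R] [Abelian R] [Linear k R] [EnoughProjectives R]

/-- The objects `A` of `R` such that `Hom(M, A)` is a finite set for every `M`. -/
def IsFinHom (A : R) : Prop := ∀ M : R, Finite (M ⟶ A)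

/-- The Euler form `⟨M,A⟩ = dim Hom(M,A) - dim Ext¹(M,A)`. -/
def euler (M A : R) : ℤ :=
  (Module.finrank k (M ⟶ A) : ℤ) -
    (Module.finrank k (((_root_.Ext k R 1).obj (op M)).obj A) : ℤ)

/-- The set of relations defining the Grothendieck group of `R`. -/
def sesSet : Set (FreeAbelianGroup R) :=
  {x | ∃ S : ShortComplex R, S.ShortExact ∧
    x = FreeAbelianGroup.of S.X₂ - FreeAbelianGroup.of S.X₁ - FreeAbelianGroup.of S.X₃}

/-- The Grothendieck group `K(R)`. -/
abbrev K0 := FreeAbelianGroup R ⧸ AddSubgroup.closure (sesSet R)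

/-- The class of an object in `K(R)`. -/
def K0.cls (X : R) : K0 R := QuotientAddGroup.mk (FreeAbelianGroup.of X)

/-- The set of relations defining the Grothendieck group of the subcategory `A`. -/
def sesSetA : Set (FreeAbelianGroup {A : R // IsFinHom R A}) :=
  {x | ∃ (S : ShortComplex R) (h1 : IsFinHom R S.X₁) (h2 : IsFinHom R S.X₂)
      (h3 : IsFinHom R S.X₃), S.ShortExact ∧
    x = FreeAbelianGroup.of ⟨S.X₂, h2⟩ - FreeAbelianGroup.of ⟨S.X₁, h1⟩ -
      FreeAbelianGroup.of ⟨S.X₃, h3⟩}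

/-- The Grothendieck group `K(A)`. -/
abbrev KA := FreeAbelianGroup {A : R // IsFinHom R A} ⧸ AddSubgroup.closure (sesSetA R)

/-- The class of an object of `A` in `K(A)`. -/
def KA.cls (A : {A : R // IsFinHom R A}) : KA R := QuotientAddGroup.mk (FreeAbelianGroup.of A)

/-- `R` is hereditary, i.e. of global dimension at most 1. -/
def Hereditary : Prop :=
  ∀ X Y : R, Subsingleton (((_root_.Ext k R 2).obj (op X)).obj Y)

/-- Condition (c): cancellation for projectives. -/
def CondC : Prop :=
  ∀ P Q M : R, Projective P → Projective Q → Projective M →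
    Nonempty ((M ⊞ P) ≅ (M ⊞ Q)) → Nonempty (P ≅ Q)

/-- Condition (d): every element of `K(R)` is a `ℚ`-linear combination of classes of
objects of `A`. -/
def CondD : Prop :=
  ∀ x : K0 R, ∃ n : ℕ, n ≠ 0 ∧ (n : ℤ) • x ∈
    AddSubgroup.closure (Set.range fun A : {A : R // IsFinHom R A} => K0.cls R A.1)

/-- Condition (e). -/
def CondE : Prop :=
  ∀ A B : R, IsFinHom R A → IsFinHom R B → K0.cls R A = K0.cls R B →
    ∀ P : R, Projective P → Nat.card (P ⟶ A) = Nat.card (P ⟶ B)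

structure Z2Cx where
  X0 : R
  X1 : R
  d0 : X0 ⟶ X1
  d1 : X1 ⟶ X0
  d01 : d0 ≫ d1 = 0
  d10 : d1 ≫ d0 = 0

namespace Z2Cx

variable {R}

/-- Morphisms of `ℤ/2`-graded complexes. -/
@[ext] structure Hom (M N : Z2Cx R) where
  f0 : M.X0 ⟶ N.X0
  f1 : M.X1 ⟶ N.X1
  comm0 : M.d0 ≫ f1 = f0 ≫ N.d0
  comm1 : M.d1 ≫ f0 = f1 ≫ N.d1

instance : CategoryStruct (Z2Cx R) where
  Hom := Hom
  id M := ⟨𝟙 _, 𝟙 _, by simp, by simp⟩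
  comp {M N P} f g := ⟨f.f0 ≫ g.f0, f.f1 ≫ g.f1, by
      rw [← Category.assoc, f.comm0, Category.assoc, g.comm0, Category.assoc], by
      rw [← Category.assoc, f.comm1, Category.assoc, g.comm1, Category.assoc]⟩

@[simp] lemma id_f0 (M : Z2Cx R) : (𝟙 M : Hom M M).f0 = 𝟙 M.X0 := rfl
@[simp] lemma id_f1 (M : Z2Cx R) : (𝟙 M : Hom M M).f1 = 𝟙 M.X1 := rfl
@[simp] lemma comp_f0 {M N P : Z2Cx R} (f : M ⟶ N) (g : N ⟶ P) :
    (f ≫ g).f0 = Hom.f0 f ≫ Hom.f0 g := rfl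
@[simp] lemma comp_f1 {M N P : Z2Cx R} (f : M ⟶ N) (g : N ⟶ P) :
    (f ≫ g).f1 = Hom.f1 f ≫ Hom.f1 g := rfl

instance : Category (Z2Cx R) where
  id_comp f := by apply Hom.ext <;> simp
  comp_id f := by apply Hom.ext <;> simp
  assoc f g h := by apply Hom.ext <;> simp

variable (R)

/-- The two-term complex `C_f` associated to a morphism `f`, concentrated so that
`X1 = P`, `X0 = Q`, `d1 = f`, `d0 = 0`. -/
def Cf {P Q : R} (f : P ⟶ Q) : Z2Cx R := ⟨Q, P, 0, f, by simp, by simp⟩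

/-- The shift involution `†`: it interchanges the gradings and negates the differentials. -/
def dagger (M : Z2Cx R) : Z2Cx R :=
  ⟨M.X1, M.X0, -M.d1, -M.d0, by simp [M.d10], by simp [M.d01]⟩

/-- The acyclic complex `K_P` with `d1 = 𝟙 P` and `d0 = 0`. -/
def KP (P : R) : Z2Cx R := ⟨P, P, 0, 𝟙 P, by simp, by simp⟩

/-- Direct sum of `ℤ/2`-graded complexes. -/
def dsum (M N : Z2Cx R) : Z2Cx R where
  X0 := M.X0 ⊞ N.X0
  X1 := M.X1 ⊞ N.X1
  d0 := biprod.map M.d0 N.d0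
  d1 := biprod.map M.d1 N.d1
  d01 := by ext <;> simp [M.d01, N.d01]
  d10 := by ext <;> simp [M.d10, N.d10]

/-- Degree `0` homology of a `ℤ/2`-graded complex. -/
def H0 (M : Z2Cx R) : R := (ShortComplex.mk M.d1 M.d0 M.d10).homology

/-- Degree `1` homology of a `ℤ/2`-graded complex. -/
def H1 (M : Z2Cx R) : R := (ShortComplex.mk M.d0 M.d1 M.d01).homology

/-- The homology complex `H•(M•)`, with zero differentials. -/
def Hcx (M : Z2Cx R) : Z2Cx R := ⟨H0 R M, H1 R M, 0, 0, by simp, by simp⟩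

/-- A complex is acyclic if its homology vanishes. -/
def Acyclic (M : Z2Cx R) : Prop := IsZero (H0 R M) ∧ IsZero (H1 R M)

end Z2Cx

namespace Z2Cx

variable {R}

/-- A short exact sequence of `ℤ/2`-graded complexes, exhibiting an extension of `M` by `N`
(short exactness of a sequence of complexes is componentwise short exactness). -/
structure ExtSES (M N : Z2Cx R) where
  E : Z2Cx R
  i : N ⟶ E
  p : E ⟶ M
  w0 : Hom.f0 i ≫ Hom.f0 p = 0
  w1 : Hom.f1 i ≫ Hom.f1 p = 0
  ex0 : (ShortComplex.mk (Hom.f0 i) (Hom.f0 p) w0).ShortExact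
  ex1 : (ShortComplex.mk (Hom.f1 i) (Hom.f1 p) w1).ShortExact

/-- Equivalence of extensions of complexes. -/
def ExtEquiv (M N : Z2Cx R) (s t : ExtSES M N) : Prop :=
  ∃ φ : s.E ≅ t.E, s.i ≫ φ.hom = t.i ∧ φ.hom ≫ t.p = s.p

/-- The set `Ext¹_{C(R)}(M•, N•)` of equivalence classes of extensions of `M•` by `N•`
in the category of `ℤ/2`-graded complexes over `R`. -/
def ExtCl (M N : Z2Cx R) := Quot (ExtEquiv M N)

end Z2Cx

/-- Complexes of projectives with homology in the subcategory `A`, i.e. objects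
of `C_fin(P)`. -/
def FinCx (M : Z2Cx R) : Prop :=
  Projective M.X0 ∧ Projective M.X1 ∧ IsFinHom R (Z2Cx.H0 R M) ∧ IsFinHom R (Z2Cx.H1 R M)

attribute [local instance] Classical.propDecidable

/-- The class `[M•] = [M₀] - [M₁]` in `K(R)` of a `ℤ/2`-graded complex. -/
def clsOf (M : Z2Cx R) : K0 R := K0.cls R M.X0 - K0.cls R M.X1

/-- Isomorphism of `ℤ/2`-graded complexes, as a relation. -/
def cxRel (M N : Z2Cx R) : Prop := Nonempty (M ≅ N)

/-- Isomorphism classes of `ℤ/2`-graded complexes. -/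
def CxCls := Quot (cxRel R)

/-- The isomorphism class of a complex. -/
def ccls (M : Z2Cx R) : CxCls R := Quot.mk _ M

/-- The isomorphism class of the middle term of an extension class. -/
def extMid {M N : Z2Cx R} : Z2Cx.ExtCl M N → CxCls R :=
  Quot.lift (fun s => ccls R s.E) (fun s t h => by
    obtain ⟨φ, -, -⟩ := h
    exact Quot.sound ⟨φ⟩)

/-- `|Ext¹_{C(R)}(M•,N•)_{P•}|` : the number of extension classes of `M•` by `N•` whose
middle term has isomorphism class `c`. -/
def extCount (M N : Z2Cx R) (c : CxCls R) : ℕ :=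
  Nat.card {x : Z2Cx.ExtCl M N // extMid R x = c}

/-- The `ℚ`-valued extension of the Euler form to `K(R) × K(R)`
(which exists by condition (d)). -/
structure EulerData where
  eQ : K0 R →+ K0 R →+ ℚ
  compat : ∀ (M A : R), IsFinHom R A →
    eQ (K0.cls R M) (K0.cls R A) = euler k R M A

/-- A choice, for every complex of projectives `M•`, of the classes `[M₁⁺]` and `[M₀⁻]`
of the components of the canonical decomposition `M• = M•⁺ ⊕ M•⁻ = C_f ⊕ C_g^†`. -/
structure DecData where
  cplus : Z2Cx R → K0 R
  cminus : Z2Cx R → K0 R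
  spec : ∀ M : Z2Cx R, Projective M.X0 → Projective M.X1 →
    ∃ (P Q P' Q' : R) (f : P ⟶ Q) (g : P' ⟶ Q'),
      Projective P ∧ Projective Q ∧ Projective P' ∧ Projective Q' ∧
      Mono f ∧ Mono g ∧
      Nonempty (M ≅ Z2Cx.dsum R (Z2Cx.Cf R f) (Z2Cx.dagger R (Z2Cx.Cf R g))) ∧
      cplus M = K0.cls R P ∧ cminus M = K0.cls R P'

variable {k R}

/-- `μ(M•,N•) = Σ_{i,j} ⟨[Mᵢ^{ε(j)}], [N_{j+1}^{ε(i)}]⟩`. -/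
def mu (ed : EulerData k R) (dd : DecData R) (M N : Z2Cx R) : ℚ :=
  ed.eQ (K0.cls R M.X0 - dd.cminus M) (dd.cplus N) +
    ed.eQ (dd.cplus M) (K0.cls R N.X1 - dd.cplus N) +
    ed.eQ (dd.cminus M) (K0.cls R N.X0 - dd.cminus N) +
    ed.eQ (K0.cls R M.X1 - dd.cplus M) (dd.cminus N)

/-- `h(M•,N•) = q^{μ(M•,N•)} ⬝ |Hom_{C(R)}(H•(M•), H•(N•))|`. -/
def hVal (ed : EulerData k R) (dd : DecData R) (M N : Z2Cx R) : ℝ :=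
  (Fintype.card k : ℝ) ^ ((mu ed dd M N : ℚ) : ℝ) *
    (Nat.card (Z2Cx.Hcx R M ⟶ Z2Cx.Hcx R N) : ℝ)

/-- The structure constants of the Hall algebra `H(C_fin(P))`:
the coefficient of the basis element `c` in `[M•] ⋆ [N•]`. -/
def hallCoeff (v : ℝ) (ed : EulerData k R) (dd : DecData R) (M N : Z2Cx R)
    (c : CxCls R) : ℂ :=
  (((v ^ (((ed.eQ (K0.cls R M.X0) (K0.cls R N.X0) +
      ed.eQ (K0.cls R M.X1) (K0.cls R N.X1) : ℚ)) : ℝ) *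
    (extCount R M N c : ℝ) / hVal ed dd M N : ℝ)) : ℂ)

variable (k R)

/-- Objects of `C_fin(P)`. -/
def FCx := {M : Z2Cx R // FinCx R M}

/-- Isomorphism classes of objects of `C_fin(P)`. -/
def FCls := Quot (fun M N : FCx R => Nonempty (M.1 ≅ N.1))

/-- The isomorphism class of an object of `C_fin(P)`. -/
def fcls (M : FCx R) : FCls R := Quot.mk _ M

/-- Comparison of isomorphism classes in `C_fin(P)` with isomorphism classes of
arbitrary complexes. -/
def fc2c : FCls R → CxCls R :=
  Quot.lift (fun M => ccls R M.1) (fun _ _ h => Quot.sound h)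

/-- The symmetrized Euler form `(α,β) = ⟨α,β⟩ + ⟨β,α⟩`. -/
def sForm (ed : EulerData k R) (a b : K0 R) : ℚ := ed.eQ a b + ed.eQ b a

open ZeroObject in
/-- The zero complex. -/
def zeroCx : Z2Cx R := ⟨0, 0, 0, 0, by simp, by simp⟩

/-- All the data constituting the localized Hall algebra `DH(R)`:
the Hall algebra `H(C_fin(P))` (a free `ℂ`-module on the isomorphism classes of
`C_fin(P)`, with the Hall multiplication `mulH` determined by the structure constants
`hallCoeff`), and its localization `D` at the classes of acyclic complexes, together
with the elements `K_α ⋆ K_β^† = KK (α, β)` and the canonical map `loc`.  The axioms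
express that `D` is precisely the localization of `H(C_fin(P))` at the classes of
acyclic complexes, with the `ℂ[K(R) × K(R)]`-bimodule structure of the paper. -/
structure DHSetting where
  v : ℝ
  v_pos : 0 < v
  v_sq : v ^ 2 = (Fintype.card k : ℝ)
  ed : EulerData k R
  dd : DecData R
  /-- the Hall multiplication on `H(C_fin(P))` -/
  mulH : ((FCls R) →₀ ℂ) →ₗ[ℂ] ((FCls R) →₀ ℂ) →ₗ[ℂ] ((FCls R) →₀ ℂ)
  mulH_single : ∀ (M N : FCx R) (c : FCls R),
    (mulH (Finsupp.single (fcls R M) 1) (Finsupp.single (fcls R N) 1)) c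
      = hallCoeff v ed dd M.1 N.1 (fc2c R c)
  /-- the carrier of the localized Hall algebra `DH(R)` -/
  D : Type u
  [grp : AddCommGroup D]
  [mod : Module ℂ D]
  /-- the multiplication `⋆` of `DH(R)` -/
  mulD : D →ₗ[ℂ] D →ₗ[ℂ] D
  one : D
  one_mul : ∀ d, mulD one d = d
  mul_one : ∀ d, mulD d one = d
  /-- the canonical map `H(C_fin(P)) → DH(R)` -/
  loc : ((FCls R) →₀ ℂ) →ₗ[ℂ] D
  loc_one : ∀ h : FinCx R (zeroCx R),
    loc (Finsupp.single (fcls R ⟨zeroCx R, h⟩) 1) = one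
  loc_mul : ∀ x y, mulD (loc x) (loc y) = loc (mulH x y)
  /-- the elements `K_α ⋆ K_β^†` -/
  KK : K0 R × K0 R → D
  KK_zero : KK 0 = one
  KK_mul : ∀ a b, mulD (KK a) (KK b) = KK (a + b)
  KK_P : ∀ (P : R), Projective P → ∀ h : FinCx R (Z2Cx.KP R P),
    loc (Finsupp.single (fcls R ⟨Z2Cx.KP R P, h⟩) 1) = KK (K0.cls R P, 0)
  KK_Pd : ∀ (P : R), Projective P → ∀ h : FinCx R (Z2Cx.dagger R (Z2Cx.KP R P)),
    loc (Finsupp.single (fcls R ⟨Z2Cx.dagger R (Z2Cx.KP R P), h⟩) 1) = KK (0, K0.cls R P)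
  /-- the bimodule rule `(K_α ⋆ K_β^†) ⋆ [M•] = v^{(α-β,[M•])} [M•] ⋆ (K_α ⋆ K_β^†)` -/
  comm_rule : ∀ (a b : K0 R) (M : FCx R),
    mulD (KK (a, b)) (loc (Finsupp.single (fcls R M) 1)) =
      (((v ^ ((sForm k R ed (a - b) (clsOf R M.1) : ℚ) : ℝ) : ℝ) : ℂ)) •
        mulD (loc (Finsupp.single (fcls R M) 1)) (KK (a, b))
  /-- multiplication of elements in standard form is induced by the Hall multiplication -/
  mul_general : ∀ (x : (FCls R) →₀ ℂ) (M : FCx R) (a b a' b' : K0 R),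
    mulD (mulD (loc x) (KK (a, b))) (mulD (loc (Finsupp.single (fcls R M) 1)) (KK (a', b'))) =
      (((v ^ ((sForm k R ed (a - b) (clsOf R M.1) : ℚ) : ℝ) : ℝ) : ℂ)) •
        mulD (loc (mulH x (Finsupp.single (fcls R M) 1))) (KK (a + a', b + b'))
  /-- every element of the localization has the standard form `x ⋆ K_α ⋆ K_β^†` -/
  span : ∀ d : D, ∃ (x : (FCls R) →₀ ℂ) (a b : K0 R), d = mulD (loc x) (KK (a, b))
  /-- the kernel of the localization map is exactly the torsion with respect to the
  classes of acyclic complexes -/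
  loc_ker : ∀ x, loc x = 0 ↔ ∃ (K : Z2Cx R) (h : FinCx R K),
    Z2Cx.Acyclic R K ∧ mulH x (Finsupp.single (fcls R ⟨K, h⟩) 1) = 0

attribute [instance] DHSetting.grp DHSetting.mod

variable {k R}

/-- The element `E_{M•} = v^{⟨[M₁⁺]-[M₀⁻],[M•]⟩} K_{-[M₁⁺]} ⋆ K^†_{-[M₀⁻]} ⋆ [M•]`
of the localized Hall algebra. -/
def Eelt (S : DHSetting k R) (M : Z2Cx R) (h : FinCx R M) : S.D :=
  (((S.v ^ ((S.ed.eQ (S.dd.cplus M - S.dd.cminus M) (clsOf R M) : ℚ) : ℝ) : ℝ) : ℂ)) •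
    S.mulD (S.KK (-(S.dd.cplus M), -(S.dd.cminus M)))
      (S.loc (Finsupp.single (fcls R ⟨M, h⟩) 1))

variable (R)

/-- A short exact sequence in `R` exhibiting an extension of `A` by `B`. -/
structure RExt (A B : R) where
  E : R
  i : B ⟶ E
  p : E ⟶ A
  w : i ≫ p = 0
  ex : (ShortComplex.mk i p w).ShortExact

/-- Equivalence of extensions in `R`. -/
def RExtEq (A B : R) (s t : RExt R A B) : Prop :=
  ∃ φ : s.E ≅ t.E, s.i ≫ φ.hom = t.i ∧ φ.hom ≫ t.p = s.p

/-- The set `Ext¹_R(A,B)` of equivalence classes of extensions of `A` by `B`. -/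
def RExtCl (A B : R) := Quot (RExtEq R A B)

/-- Isomorphism classes of objects of `R`. -/
def RCls := Quot (fun X Y : R => Nonempty (X ≅ Y))

/-- The isomorphism class of an object of `R`. -/
def rcls (X : R) : RCls R := Quot.mk _ X

/-- The isomorphism class of the middle term of an extension class. -/
def rExtMid {A B : R} : RExtCl R A B → RCls R :=
  Quot.lift (fun s => rcls R s.E) (fun _ _ h => by
    obtain ⟨φ, -, -⟩ := h
    exact Quot.sound ⟨φ⟩)

/-- `|Ext¹_R(A,B)_C|`: the number of extension classes of `A` by `B` with middle term of
isomorphism class `c`. -/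
def rExtCount (A B : R) (c : RCls R) : ℕ :=
  Nat.card {x : RExtCl R A B // rExtMid R x = c}

variable {R}

/-!
Let `M•` and `N•` be projective resolutions of `A` and `B`. The middle term of an extension of
`M•` by `N•` is again a projective resolution, and taking cokernels of `d₁` identifies
`Ext¹(M•, N•)` with `Ext¹(A, B)` in such a way that the middle term on the left resolves the one
on the right. In `E_{M•} ⋆ E_{N•}` the powers of `v` coming from the Hall product, from the
commutation with `K_α` and from `h(M•, N•)` collapse to `v^⟨A,B⟩ / |Hom(A, B)|`, so the product is
the sum of `E_{P•}` over all extension classes, with this factor. Finally `E_{P•}` depends only on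
the object which `P•` resolves: the product formula for `E_{K_T} = 1` gives `E_{P• ⊕ K_T} = E_{P•}`,
and by Schanuel's lemma two resolutions become isomorphic after adding such complexes. Grouping
the extension classes by their middle terms gives the theorem.
-/

section FiberSums

lemma finsum_card_fiber_smul {X Y D : Type*} [Fintype X] [AddCommMonoid D]
    (m : X → Y) (G : Y → D) :
    ∑ᶠ y, Nat.card {x // m x = y} • G y = ∑ x, G (m x) := by
  rw [finsum_eq_sum_of_support_subset (s := Finset.univ.image m), Finset.sum_comp]
  · simp only [Nat.card_eq_fintype_card, Fintype.card_subtype]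
  · intro y hy
    have hcard : Nat.card {x // m x = y} ≠ 0 := fun h ↦ hy (by simp only [h, zero_smul])
    obtain ⟨x, hx⟩ := (Nat.card_ne_zero.mp hcard).1
    exact Finset.mem_coe.mpr (Finset.mem_image.mpr ⟨x, Finset.mem_univ x, hx⟩)

end FiberSums

section ShortExactSequences

variable {𝒜 : Type*} [Category 𝒜] [Abelian 𝒜]

lemma exists_lift_of_shortExact {X Y Z T : 𝒜} {f : X ⟶ Y} {g : Y ⟶ Z} {w : f ≫ g = 0}
    (h : (ShortComplex.mk f g w).ShortExact) (x : T ⟶ Y) (hx : x ≫ g = 0) :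
    ∃ y : T ⟶ X, y ≫ f = x :=
  have := h.mono_f
  ⟨h.exact.lift x hx, h.exact.lift_f x hx⟩

lemma exists_desc_of_shortExact {X Y Z T : 𝒜} {f : X ⟶ Y} {g : Y ⟶ Z} {w : f ≫ g = 0}
    (h : (ShortComplex.mk f g w).ShortExact) (x : Y ⟶ T) (hx : f ≫ x = 0) :
    ∃ y : Z ⟶ T, g ≫ y = x :=
  have := h.epi_g
  ⟨h.exact.desc x hx, h.exact.g_desc x hx⟩

lemma isIso_of_shortExact_of_comm {X Y Y' Z : 𝒜} {f : X ⟶ Y} {g : Y ⟶ Z} {f' : X ⟶ Y'}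
    {g' : Y' ⟶ Z} {w : f ≫ g = 0} {w' : f' ≫ g' = 0}
    (h : (ShortComplex.mk f g w).ShortExact) (h' : (ShortComplex.mk f' g' w').ShortExact)
    (φ : Y ⟶ Y') (hf : f ≫ φ = f') (hg : φ ≫ g' = g) : IsIso φ := by
  let Φ : ShortComplex.mk f g w ⟶ ShortComplex.mk f' g' w' :=
    { τ₁ := 𝟙 X
      τ₂ := φ
      τ₃ := 𝟙 Z
      comm₁₂ := by simp [hf]
      comm₂₃ := by simp [hg] }
  have : IsIso Φ.τ₁ := inferInstanceAs (IsIso (𝟙 X))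
  have : IsIso Φ.τ₃ := inferInstanceAs (IsIso (𝟙 Z))
  exact ShortComplex.isIso₂_of_shortExact_of_isIso₁₃ Φ h h'

lemma projective_of_shortExact {X Y Z : 𝒜} {f : X ⟶ Y} {g : Y ⟶ Z} {w : f ≫ g = 0}
    (h : (ShortComplex.mk f g w).ShortExact) [Projective X] [Projective Z] : Projective Y :=
  Projective.of_iso h.splittingOfProjective.isoBinaryBiproduct.symm
    (inferInstanceAs (Projective (X ⊞ Z)))

/-- Schanuel's lemma, in terms of the covers rather than their kernels. -/
lemma exists_biprod_iso_of_projective_covers {P P' A : 𝒜} [Projective P] [Projective P']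
    (a : P ⟶ A) (a' : P' ⟶ A) [Epi a] [Epi a'] :
    ∃ e : P' ⊞ P ≅ P ⊞ P', e.hom ≫ biprod.desc 0 a' = biprod.desc 0 a := by
  have shear : ∀ {P P' : 𝒜} [Projective P'] (a : P ⟶ A) (a' : P' ⟶ A) [Epi a],
      ∃ e : P' ⊞ P ≅ P' ⊞ P, e.hom ≫ biprod.desc 0 a = biprod.desc a' a := by
    intro P P' _ a a' _
    refine ⟨Biprod.unipotentUpper (Projective.factorThru a' a), ?_⟩
    ext <;> simp [Biprod.unipotentUpper, Biprod.ofComponents]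
  obtain ⟨e, he⟩ := shear a a'
  obtain ⟨e', he'⟩ := shear a' a
  refine ⟨e.symm ≪≫ biprod.braiding P' P ≪≫ e', ?_⟩
  have hswap : (biprod.braiding P' P).hom ≫ biprod.desc a a' = biprod.desc a' a := by
    ext <;> simp
  rw [Iso.trans_hom, Iso.trans_hom, Category.assoc, Category.assoc, he', hswap, ← he,
    Iso.symm_hom, Iso.inv_hom_id_assoc]

/-- The nine lemma, with the bottom row formed by the cokernels of the columns. -/
lemma shortExact_of_rightExact_columns (K : ShortComplex (ShortComplex 𝒜))
    (h₁ : K.X₁.Exact) [Epi K.X₁.g] (h₂ : K.X₂.ShortExact)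
    (c₁ : (K.map ShortComplex.π₁).Exact) [Epi (K.map ShortComplex.π₁).g]
    (c₂ : (K.map ShortComplex.π₂).Exact) [Epi (K.map ShortComplex.π₂).g]
    (c₃ : (K.map ShortComplex.π₃).ShortExact) : K.X₃.ShortExact := by
  have := h₂.mono_f
  have := h₂.epi_g
  have : Mono K.f.τ₃ := c₃.mono_f
  have := c₃.epi_g
  have hcoker : IsColimit (CokernelCofork.ofπ K.g K.zero) := by
    apply ShortComplex.isColimitOfIsColimitπ
    · exact (CokernelCofork.isColimitMapCoconeEquiv _ _).symm c₁.gIsCokernel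
    · exact (CokernelCofork.isColimitMapCoconeEquiv _ _).symm c₂.gIsCokernel
    · exact (CokernelCofork.isColimitMapCoconeEquiv _ _).symm c₃.exact.gIsCokernel
  let σ : ShortComplex.SnakeInput 𝒜 :=
    { L₀ := kernel K.f
      L₁ := K.X₁
      L₂ := K.X₂
      L₃ := K.X₃
      v₀₁ := kernel.ι K.f
      v₁₂ := K.f
      v₂₃ := K.g
      w₀₂ := kernel.condition K.f
      w₁₃ := K.zero
      h₀ := kernelIsKernel K.f
      h₃ := hcoker
      L₁_exact := h₁
      epi_L₁_g := inferInstance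
      L₂_exact := h₂.exact
      mono_L₂_f := inferInstance }
  have hι : σ.v₀₁.τ₃ = 0 := by
    rw [← cancel_mono K.f.τ₃, zero_comp]
    exact σ.w₀₂_τ₃
  have hδ : σ.δ = 0 :=
    have := σ.mono_v₀₁_τ₃
    (IsZero.of_mono_eq_zero _ hι).eq_of_src _ _
  have : Mono K.X₃.f := (ShortComplex.exact_iff_mono _ hδ).mp σ.L₂'_exact
  have : Epi σ.L₂.g := h₂.epi_g
  have : Epi K.X₃.g := σ.epi_L₃_g
  exact ⟨σ.L₃_exact⟩

end ShortExactSequences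

section FiniteHom

variable {𝒞 : Type u} [SmallCategory 𝒞]

lemma IsFinHom.of_iso {A B : 𝒞} (e : A ≅ B) (hA : IsFinHom 𝒞 A) : IsFinHom 𝒞 B :=
  fun T ↦ have := hA T; .of_equiv _ e.homToEquiv

lemma isFinHom_of_isZero {Z : 𝒞} (hZ : IsZero Z) : IsFinHom 𝒞 Z :=
  fun T ↦ have : Subsingleton (T ⟶ Z) := ⟨fun _ _ ↦ hZ.eq_of_tgt _ _⟩; inferInstance

lemma IsFinHom.of_shortExact [Abelian 𝒞] {X Y Z : 𝒞} {f : X ⟶ Y} {g : Y ⟶ Z}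
    {w : f ≫ g = 0} (h : (ShortComplex.mk f g w).ShortExact) (hX : IsFinHom 𝒞 X)
    (hZ : IsFinHom 𝒞 Z) : IsFinHom 𝒞 Y := by
  intro T
  have := hX T
  have := hZ T
  refine Set.finite_univ_iff.mp (Set.Finite.of_finite_fibers (fun x : T ⟶ Y ↦ x ≫ g)
    (Set.toFinite _) fun z _ ↦ ?_)
  obtain hempty | ⟨x₀, -, hx₀⟩ :=
    (Set.univ ∩ (fun x : T ⟶ Y ↦ x ≫ g) ⁻¹' {z}).eq_empty_or_nonempty
  · exact hempty ▸ Set.finite_empty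
  · refine (Set.finite_range fun y : T ⟶ X ↦ y ≫ f + x₀).subset fun x hx ↦ ?_
    have hdiff : (x - x₀) ≫ g = 0 := by
      rw [Preadditive.sub_comp, sub_eq_zero]
      exact hx.2.trans hx₀.symm
    obtain ⟨y, hy⟩ := exists_lift_of_shortExact h (x - x₀) hdiff
    exact ⟨y, by simp only [hy, sub_add_cancel]⟩

end FiniteHom

section Extensions

variable {𝒞 : Type u} [SmallCategory 𝒞] [Abelian 𝒞]

lemma extEquiv_equivalence (M N : Z2Cx 𝒞) : Equivalence (Z2Cx.ExtEquiv M N) where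
  refl s := ⟨Iso.refl s.E, Category.comp_id _, Category.id_comp _⟩
  symm := by
    rintro s t ⟨φ, hi, hp⟩
    exact ⟨φ.symm, by simp [← hi], by simp [← hp]⟩
  trans := by
    rintro s t r ⟨φ, hi, hp⟩ ⟨ψ, hi', hp'⟩
    exact ⟨φ ≪≫ ψ, by rw [Iso.trans_hom, reassoc_of% hi, hi'],
      by rw [Iso.trans_hom, Category.assoc, hp', hp]⟩

lemma rExtEq_equivalence (A B : 𝒞) : Equivalence (RExtEq 𝒞 A B) where
  refl s := ⟨Iso.refl s.E, Category.comp_id _, Category.id_comp _⟩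
  symm := by
    rintro s t ⟨φ, hi, hp⟩
    exact ⟨φ.symm, by simp [← hi], by simp [← hp]⟩
  trans := by
    rintro s t r ⟨φ, hi, hp⟩ ⟨ψ, hi', hp'⟩
    exact ⟨φ ≪≫ ψ, by rw [Iso.trans_hom, reassoc_of% hi, hi'],
      by rw [Iso.trans_hom, Category.assoc, hp', hp]⟩

end Extensions

section Complexes

variable {𝒞 : Type u} [SmallCategory 𝒞] [Abelian 𝒞]

namespace Z2Cx

/-- The functor taking a complex to its component of degree `0`. -/
def eval0 : Z2Cx 𝒞 ⥤ 𝒞 where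
  obj M := M.X0
  map φ := φ.f0

/-- The functor taking a complex to its component of degree `1`. -/
def eval1 : Z2Cx 𝒞 ⥤ 𝒞 where
  obj M := M.X1
  map φ := φ.f1

lemma isIso_of_isIso_components {M N : Z2Cx 𝒞} (φ : M ⟶ N) [IsIso φ.f0] [IsIso φ.f1] :
    IsIso φ where
  out := by
    let ψ : N ⟶ M :=
      { f0 := inv φ.f0
        f1 := inv φ.f1
        comm0 := by
          rw [IsIso.eq_inv_comp, ← Category.assoc, ← φ.comm0, Category.assoc, IsIso.hom_inv_id,
            Category.comp_id]
        comm1 := by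
          rw [IsIso.eq_inv_comp, ← Category.assoc, ← φ.comm1, Category.assoc, IsIso.hom_inv_id,
            Category.comp_id] }
    exact ⟨ψ, Hom.ext (IsIso.hom_inv_id φ.f0) (IsIso.hom_inv_id φ.f1),
      Hom.ext (IsIso.inv_hom_id φ.f0) (IsIso.inv_hom_id φ.f1)⟩

/-- The complex `M•` is a projective resolution `0 → M₁ → M₀ → A → 0` with augmentation `a`;
in particular `d₀ = 0`, see `Resolves.d0_eq_zero`. -/
structure Resolves (M : Z2Cx 𝒞) {A : 𝒞} (a : M.X0 ⟶ A) : Prop where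
  projective_X0 : Projective M.X0
  projective_X1 : Projective M.X1
  d1_comp : M.d1 ≫ a = 0
  shortExact : (ShortComplex.mk M.d1 a d1_comp).ShortExact

namespace Resolves

variable {M N : Z2Cx 𝒞} {A : 𝒞} {a : M.X0 ⟶ A}

lemma mono_d1 (hM : M.Resolves a) : Mono M.d1 := hM.shortExact.mono_f

lemma epi (hM : M.Resolves a) : Epi a := hM.shortExact.epi_g

lemma d0_eq_zero (hM : M.Resolves a) : M.d0 = 0 := by
  have := hM.mono_d1
  rw [← cancel_mono M.d1, M.d01, zero_comp]

lemma nonempty_iso {b : N.X0 ⟶ A} (hM : M.Resolves a) (hN : N.Resolves b)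
    (e : M.X0 ≅ N.X0) (he : e.hom ≫ b = a) : Nonempty (M ≅ N) := by
  have := hM.mono_d1
  have := hN.mono_d1
  obtain ⟨φ, hφ⟩ := exists_lift_of_shortExact hN.shortExact (M.d1 ≫ e.hom)
    (by rw [Category.assoc, he, hM.d1_comp])
  obtain ⟨ψ, hψ⟩ := exists_lift_of_shortExact hM.shortExact (N.d1 ≫ e.inv)
    (by rw [Category.assoc, ← he, e.inv_hom_id_assoc, hN.d1_comp])
  have hφψ : φ ≫ ψ = 𝟙 M.X1 := by
    rw [← cancel_mono M.d1, Category.assoc, hψ, reassoc_of% hφ, e.hom_inv_id, Category.comp_id,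
      Category.id_comp]
  have hψφ : ψ ≫ φ = 𝟙 N.X1 := by
    rw [← cancel_mono N.d1, Category.assoc, hφ, reassoc_of% hψ, e.inv_hom_id, Category.comp_id,
      Category.id_comp]
  let θ : M ⟶ N :=
    { f0 := e.hom
      f1 := φ
      comm0 := by rw [hM.d0_eq_zero, hN.d0_eq_zero, zero_comp, comp_zero]
      comm1 := hφ.symm }
  have : IsIso θ.f0 := inferInstanceAs (IsIso e.hom)
  have : IsIso θ.f1 := ⟨ψ, hφψ, hψφ⟩
  have := isIso_of_isIso_components θ
  exact ⟨asIso θ⟩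

lemma of_iso (hM : M.Resolves a) (e : N ≅ M) : N.Resolves (e.hom.f0 ≫ a) := by
  have hw : N.d1 ≫ e.hom.f0 ≫ a = 0 := by
    rw [← Category.assoc, e.hom.comm1, Category.assoc, hM.d1_comp, comp_zero]
  have h0 := hM.projective_X0
  have h1 := hM.projective_X1
  let θ : ShortComplex.mk M.d1 a hM.d1_comp ≅ ShortComplex.mk N.d1 (e.hom.f0 ≫ a) hw :=
    ShortComplex.isoMk (eval1.mapIso e.symm) (eval0.mapIso e.symm) (Iso.refl A) e.inv.comm1.symm
      ((eval0.mapIso e).inv_hom_id_assoc a |>.trans (Category.comp_id a).symm)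
  exact ⟨h0.of_iso (eval0.mapIso e.symm), h1.of_iso (eval1.mapIso e.symm), hw,
    ShortComplex.shortExact_of_iso θ hM.shortExact⟩

lemma comp_iso {A' : 𝒞} (hM : M.Resolves a) (e : A ≅ A') : M.Resolves (a ≫ e.hom) := by
  have hw : M.d1 ≫ a ≫ e.hom = 0 := by rw [reassoc_of% hM.d1_comp, zero_comp]
  let θ : ShortComplex.mk M.d1 a hM.d1_comp ≅ ShortComplex.mk M.d1 (a ≫ e.hom) hw :=
    ShortComplex.isoMk (Iso.refl M.X1) (Iso.refl M.X0) e (by simp) (by simp)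
  exact ⟨hM.projective_X0, hM.projective_X1, hw,
    ShortComplex.shortExact_of_iso θ hM.shortExact⟩

end Resolves

lemma resolves_KP (T : 𝒞) [Projective T] {Z : 𝒞} (hZ : IsZero Z) :
    (KP 𝒞 T).Resolves (0 : T ⟶ Z) where
  projective_X0 := ‹_›
  projective_X1 := ‹_›
  d1_comp := comp_zero
  shortExact := (ShortComplex.Splitting.ofIsIsoOfIsZero
    (ShortComplex.mk (𝟙 T) (0 : T ⟶ Z) comp_zero) (inferInstanceAs (IsIso (𝟙 T))) hZ).shortExact

lemma resolves_Cf {P Q : 𝒞} [Projective P] [Projective Q] {f : P ⟶ Q} {A : 𝒞} {a : Q ⟶ A}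
    {w : f ≫ a = 0} (h : (ShortComplex.mk f a w).ShortExact) : (Cf 𝒞 f).Resolves a :=
  ⟨‹_›, ‹_›, w, h⟩

namespace ExtSES

variable {M N : Z2Cx 𝒞} {A B : 𝒞}

/-- The short exact sequence formed by the components of degree `0`. -/
abbrev row0 (s : ExtSES M N) : ShortComplex 𝒞 := ShortComplex.mk s.i.f0 s.p.f0 s.w0

/-- The short exact sequence formed by the components of degree `1`. -/
abbrev row1 (s : ExtSES M N) : ShortComplex 𝒞 := ShortComplex.mk s.i.f1 s.p.f1 s.w1

/-- The map of short exact sequences given by the differentials `d₁`. -/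
def d1Map (s : ExtSES M N) : s.row1 ⟶ s.row0 where
  τ₁ := N.d1
  τ₂ := s.E.d1
  τ₃ := M.d1
  comm₁₂ := s.i.comm1
  comm₂₃ := s.p.comm1

lemma isIso_of_comm {s t : ExtSES M N} (φ : s.E ⟶ t.E) (hi : s.i ≫ φ = t.i)
    (hp : φ ≫ t.p = s.p) : IsIso φ := by
  have : IsIso φ.f0 :=
    isIso_of_shortExact_of_comm s.ex0 t.ex0 φ.f0 (congrArg Hom.f0 hi) (congrArg Hom.f0 hp)
  have : IsIso φ.f1 :=
    isIso_of_shortExact_of_comm s.ex1 t.ex1 φ.f1 (congrArg Hom.f1 hi) (congrArg Hom.f1 hp)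
  exact isIso_of_isIso_components φ

/-- The extension `t` of `A` by `B` is induced by the extension `s` of `M•` by `N•`, where `M•`
and `N•` are augmented by `a` and `b`: the map `r` augments the middle term of `s` by that of
`t`, compatibly with `a` and `b`. -/
structure Augments (s : ExtSES M N) (a : M.X0 ⟶ A) (b : N.X0 ⟶ B) (t : RExt 𝒞 A B)
    (r : s.E.X0 ⟶ t.E) : Prop where
  i_comp : s.i.f0 ≫ r = b ≫ t.i
  comp_p : r ≫ t.p = s.p.f0 ≫ a
  d1_comp : s.E.d1 ≫ r = 0

lemma resolves_cokernel {a : M.X0 ⟶ A} {b : N.X0 ⟶ B} (s : ExtSES M N) (hM : M.Resolves a)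
    (hN : N.Resolves b) : s.E.Resolves (cokernel.π s.E.d1) := by
  have := hM.projective_X0
  have := hM.projective_X1
  have := hN.projective_X0
  have := hN.projective_X1
  have : Mono s.d1Map.τ₁ := hN.mono_d1
  have : Mono s.d1Map.τ₃ := hM.mono_d1
  have : Mono s.row1.f := s.ex1.mono_f
  have : Mono s.row0.f := s.ex0.mono_f
  have : Mono s.E.d1 := ShortComplex.mono_τ₂_of_exact_of_mono s.d1Map s.ex1.exact
  exact ⟨projective_of_shortExact s.ex0, projective_of_shortExact s.ex1, cokernel.condition _,
    ⟨ShortComplex.exact_cokernel _⟩⟩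

lemma exists_augments {a : M.X0 ⟶ A} {b : N.X0 ⟶ B} (s : ExtSES M N) (hM : M.Resolves a)
    (hN : N.Resolves b) :
    ∃ (t : RExt 𝒞 A B) (r : s.E.X0 ⟶ t.E), s.Augments a b t r ∧ s.E.Resolves r := by
  let r := cokernel.π s.E.d1
  obtain ⟨i, hi⟩ := exists_desc_of_shortExact hN.shortExact (s.i.f0 ≫ r) (by
    rw [← Category.assoc, s.i.comm1, Category.assoc, cokernel.condition, comp_zero])
  let p := cokernel.desc s.E.d1 (s.p.f0 ≫ a) (by
    rw [← Category.assoc, s.p.comm1, Category.assoc, hM.d1_comp, comp_zero])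
  have hp : r ≫ p = s.p.f0 ≫ a := cokernel.π_desc _ _ _
  have hw : i ≫ p = 0 := by
    have := hN.epi
    rw [← cancel_epi b, reassoc_of% hi, hp, reassoc_of% s.w0, zero_comp, comp_zero]
  let ρ : s.row0 ⟶ ShortComplex.mk i p hw :=
    { τ₁ := b
      τ₂ := r
      τ₃ := a
      comm₁₂ := hi
      comm₂₃ := hp }
  have hρ : s.d1Map ≫ ρ = 0 :=
    ShortComplex.hom_ext _ _ hN.d1_comp (cokernel.condition s.E.d1) hM.d1_comp
  let K := ShortComplex.mk s.d1Map ρ hρ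
  have : Epi K.X₁.g := s.ex1.epi_g
  have : Epi (K.map ShortComplex.π₁).g := hN.epi
  have : Epi (K.map ShortComplex.π₂).g := inferInstanceAs (Epi (cokernel.π s.E.d1))
  have hex : (ShortComplex.mk i p hw).ShortExact :=
    shortExact_of_rightExact_columns K s.ex1.exact s.ex0 hN.shortExact.exact
      (ShortComplex.exact_cokernel s.E.d1) hM.shortExact
  exact ⟨⟨_, i, p, hw, hex⟩, r, ⟨hi.symm, hp, cokernel.condition s.E.d1⟩,
    s.resolves_cokernel hM hN⟩

namespace Augments

variable {a : M.X0 ⟶ A} {b : N.X0 ⟶ B} {s s' : ExtSES M N} {t t' : RExt 𝒞 A B}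
  {r : s.E.X0 ⟶ t.E} {r' : s'.E.X0 ⟶ t.E}

lemma precomp (h : s.Augments a b t r) (φ : s'.E ⟶ s.E) (hi : s'.i ≫ φ = s.i)
    (hp : φ ≫ s.p = s'.p) : s'.Augments a b t (φ.f0 ≫ r) where
  i_comp := by rw [← h.i_comp, ← hi]; exact (Category.assoc _ _ _).symm
  comp_p := by rw [Category.assoc, h.comp_p, ← hp]; exact (Category.assoc _ _ _).symm
  d1_comp := by rw [← Category.assoc, φ.comm1, Category.assoc, h.d1_comp, comp_zero]

lemma postcomp (h : s.Augments a b t r) (ψ : t.E ⟶ t'.E) (hi : t.i ≫ ψ = t'.i)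
    (hp : ψ ≫ t'.p = t.p) : s.Augments a b t' (r ≫ ψ) where
  i_comp := by rw [← hi, reassoc_of% h.i_comp]
  comp_p := by rw [Category.assoc, hp, h.comp_p]
  d1_comp := by rw [reassoc_of% h.d1_comp, zero_comp]

lemma exists_iso {r' : s.E.X0 ⟶ t'.E} (h : s.Augments a b t r) (h' : s.Augments a b t' r')
    (hr : s.E.Resolves r) (hN : N.Resolves b) :
    ∃ φ : t.E ≅ t'.E, (t.i ≫ φ.hom = t'.i ∧ φ.hom ≫ t'.p = t.p) ∧ r ≫ φ.hom = r' := by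
  have := hN.epi
  have := hr.epi
  obtain ⟨φ, hφ⟩ := exists_desc_of_shortExact hr.shortExact r' h'.d1_comp
  have hi : t.i ≫ φ = t'.i := by
    rw [← cancel_epi b, ← reassoc_of% h.i_comp, hφ, h'.i_comp]
  have hp : φ ≫ t'.p = t.p := by
    rw [← cancel_epi r, reassoc_of% hφ, h'.comp_p, h.comp_p]
  have := isIso_of_shortExact_of_comm t.ex t'.ex φ hi hp
  exact ⟨asIso φ, ⟨hi, hp⟩, hφ⟩

lemma resolves (h : s.Augments a b t r) (hM : M.Resolves a) (hN : N.Resolves b) :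
    s.E.Resolves r := by
  obtain ⟨t₀, r₀, h₀, hr₀⟩ := s.exists_augments hM hN
  obtain ⟨φ, -, hφ⟩ := h₀.exists_iso h hr₀ hN
  exact hφ ▸ hr₀.comp_iso φ

lemma rExtEq {r' : s.E.X0 ⟶ t'.E} (h : s.Augments a b t r) (h' : s.Augments a b t' r')
    (hM : M.Resolves a) (hN : N.Resolves b) : RExtEq 𝒞 A B t t' := by
  obtain ⟨φ, hφ, -⟩ := h.exists_iso h' (h.resolves hM hN) hN
  exact ⟨φ, hφ⟩

lemma exists_lift (h : s.Augments a b t r) (hN : N.Resolves b) {T : 𝒞} [Projective T]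
    (x : T ⟶ M.X0) (y : T ⟶ t.E) (hxy : x ≫ a = y ≫ t.p) :
    ∃ z : T ⟶ s.E.X0, z ≫ s.p.f0 = x ∧ z ≫ r = y := by
  have : Epi s.p.f0 := s.ex0.epi_g
  have := hN.epi
  let z := Projective.factorThru x s.p.f0
  have hz : z ≫ s.p.f0 = x := Projective.factorThru_comp _ _
  obtain ⟨c, hc⟩ := exists_lift_of_shortExact t.ex (y - z ≫ r) (by
    rw [Preadditive.sub_comp, Category.assoc, h.comp_p, reassoc_of% hz, hxy, sub_self])
  let c' := Projective.factorThru c b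
  have hc' : c' ≫ b = c := Projective.factorThru_comp _ _
  refine ⟨z + c' ≫ s.i.f0, ?_, ?_⟩
  · rw [Preadditive.add_comp, hz, Category.assoc, s.w0, comp_zero, add_zero]
  · rw [Preadditive.add_comp, Category.assoc, h.i_comp, reassoc_of% hc', hc, add_sub_cancel]

lemma exists_hom_X0 (h : s.Augments a b t r) (h' : s'.Augments a b t r') (hM : M.Resolves a)
    (hN : N.Resolves b) : ∃ φ : s.E.X0 ⟶ s'.E.X0,
      s.i.f0 ≫ φ = s'.i.f0 ∧ φ ≫ s'.p.f0 = s.p.f0 ∧ φ ≫ r' = r := by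
  have := hM.projective_X0
  have σ : s.row0.Splitting := s.ex0.splittingOfProjective
  have hσ : σ.s ≫ s.p.f0 = 𝟙 M.X0 := σ.s_g
  have hρ : s.i.f0 ≫ σ.r = 𝟙 N.X0 := σ.f_r
  have hid : σ.r ≫ s.i.f0 + s.p.f0 ≫ σ.s = 𝟙 s.E.X0 := σ.id
  obtain ⟨z, hzp, hzr⟩ := h'.exists_lift hN (𝟙 M.X0) (σ.s ≫ r) (by
    rw [Category.assoc, h.comp_p, reassoc_of% hσ, Category.id_comp])
  refine ⟨σ.r ≫ s'.i.f0 + s.p.f0 ≫ z, ?_, ?_, ?_⟩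
  · rw [Preadditive.comp_add, reassoc_of% hρ, reassoc_of% s.w0, zero_comp, add_zero]
  · rw [Preadditive.add_comp, Category.assoc, Category.assoc, s'.w0, hzp, comp_zero, zero_add,
      Category.comp_id]
  · rw [Preadditive.add_comp, Category.assoc, Category.assoc, h'.i_comp, hzr, ← h.i_comp,
      ← Category.assoc, ← Category.assoc, ← Preadditive.add_comp, hid, Category.id_comp]

lemma extEquiv (h : s.Augments a b t r) (h' : s'.Augments a b t r') (hM : M.Resolves a)
    (hN : N.Resolves b) : ExtEquiv M N s s' := by
  obtain ⟨φ, hi, hp, hr⟩ := h.exists_hom_X0 h' hM hN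
  have hE := h.resolves hM hN
  have hE' := h'.resolves hM hN
  have := hE'.mono_d1
  have := hM.mono_d1
  obtain ⟨φ₁, hφ₁⟩ := exists_lift_of_shortExact hE'.shortExact (s.E.d1 ≫ φ) (by
    rw [Category.assoc, hr, h.d1_comp])
  let θ : s.E ⟶ s'.E :=
    { f0 := φ
      f1 := φ₁
      comm0 := by rw [hE.d0_eq_zero, hE'.d0_eq_zero, zero_comp, comp_zero]
      comm1 := hφ₁.symm }
  have hi₁ : s.i.f1 ≫ φ₁ = s'.i.f1 := by
    rw [← cancel_mono s'.E.d1, Category.assoc, hφ₁, ← reassoc_of% s.i.comm1, hi, s'.i.comm1]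
  have hp₁ : φ₁ ≫ s'.p.f1 = s.p.f1 := by
    rw [← cancel_mono M.d1, Category.assoc, ← s'.p.comm1, reassoc_of% hφ₁, hp, s.p.comm1]
  have := isIso_of_comm θ (Hom.ext hi hi₁) (Hom.ext hp hp₁)
  exact ⟨asIso θ, Hom.ext hi hi₁, Hom.ext hp hp₁⟩

end Augments

/-- The extension of `M•` by `N•` with componentwise split middle term and differential `d₁`
twisted by `u : M₁ ⟶ N₀`, for complexes with `d₀ = 0`. -/
def twist (hM : M.d0 = 0) (hN : N.d0 = 0) (u : M.X1 ⟶ N.X0) : ExtSES M N where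
  E :=
    { X0 := N.X0 ⊞ M.X0
      X1 := N.X1 ⊞ M.X1
      d0 := 0
      d1 := biprod.map N.d1 M.d1 + biprod.snd ≫ u ≫ biprod.inl
      d01 := zero_comp
      d10 := comp_zero }
  i :=
    { f0 := biprod.inl
      f1 := biprod.inl
      comm0 := by rw [hN, zero_comp, comp_zero]
      comm1 := by simp }
  p :=
    { f0 := biprod.snd
      f1 := biprod.snd
      comm0 := by rw [hM, zero_comp, comp_zero]
      comm1 := by simp }
  w0 := biprod.inl_snd
  w1 := biprod.inl_snd
  ex0 := (ShortComplex.Splitting.ofHasBinaryBiproduct N.X0 M.X0).shortExact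
  ex1 := (ShortComplex.Splitting.ofHasBinaryBiproduct N.X1 M.X1).shortExact

variable {a : M.X0 ⟶ A} {b : N.X0 ⟶ B}

lemma exists_twist_augments (hM : M.Resolves a) (hN : N.Resolves b) (t : RExt 𝒞 A B) :
    ∃ w : M.X1 ⟶ B, ∀ u : M.X1 ⟶ N.X0, u ≫ b = w →
      ∃ r, (twist hM.d0_eq_zero hN.d0_eq_zero u).Augments a b t r := by
  have := hM.projective_X0
  have : Epi t.p := t.ex.epi_g
  let σ := Projective.factorThru a t.p
  have hσ : σ ≫ t.p = a := Projective.factorThru_comp a t.p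
  obtain ⟨w, hw⟩ := exists_lift_of_shortExact t.ex (-(M.d1 ≫ σ)) (by
    rw [Preadditive.neg_comp, Category.assoc, hσ, hM.d1_comp, neg_zero])
  have hp : biprod.desc (b ≫ t.i) σ ≫ t.p = biprod.snd ≫ a := by
    ext <;> simp [t.w, hσ]
  have hd (u : M.X1 ⟶ N.X0) (hu : u ≫ b = w) :
      (biprod.map N.d1 M.d1 + biprod.snd ≫ u ≫ biprod.inl) ≫ biprod.desc (b ≫ t.i) σ = 0 := by
    ext
    · simp [reassoc_of% hN.d1_comp]
    · simp [reassoc_of% hu, hw]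
  exact ⟨w, fun u hu ↦ ⟨biprod.desc (b ≫ t.i) σ, biprod.inl_desc _ _, hp, hd u hu⟩⟩

lemma exists_injective_rExtCl (hM : M.Resolves a) (hN : N.Resolves b) :
    ∃ ω : RExtCl 𝒞 A B → (M.X1 ⟶ B), Function.Injective ω := by
  have := hM.projective_X1
  have := hN.epi
  choose ω hω using fun x : RExtCl 𝒞 A B ↦ exists_twist_augments hM hN x.out
  refine ⟨ω, fun x y hxy ↦ ?_⟩
  obtain ⟨r, h⟩ := hω x (Projective.factorThru (ω x) b) (Projective.factorThru_comp _ _)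
  obtain ⟨r', h'⟩ := hω y (Projective.factorThru (ω x) b) (by
    rw [Projective.factorThru_comp, hxy])
  rw [← Quot.out_eq x, ← Quot.out_eq y]
  exact Quot.sound (h.rExtEq h' hM hN)

lemma exists_extCl_equiv (hM : M.Resolves a) (hN : N.Resolves b) :
    ∃ Φ : ExtCl M N ≃ RExtCl 𝒞 A B, ∀ s : ExtSES M N, ∃ (t : RExt 𝒞 A B) (r : s.E.X0 ⟶ t.E),
      Φ (Quot.mk _ s) = Quot.mk _ t ∧ s.Augments a b t r := by
  have := hM.projective_X1
  have := hN.epi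
  choose τ r hτ _ using fun s : ExtSES M N ↦ s.exists_augments hM hN
  have hτ_map : ∀ s s', ExtEquiv M N s s' → RExtEq 𝒞 A B (τ s) (τ s') := by
    rintro s s' ⟨φ, hi, hp⟩
    exact (hτ s).rExtEq ((hτ s').precomp φ.hom hi hp) hM hN
  refine ⟨Equiv.ofBijective (Quot.map τ hτ_map) ⟨?_, ?_⟩, fun s ↦ ⟨τ s, r s, rfl, hτ s⟩⟩
  · rintro ⟨s⟩ ⟨s'⟩ h
    obtain ⟨φ, hi, hp⟩ := (rExtEq_equivalence A B).quot_mk_eq_iff _ _ |>.mp h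
    exact Quot.sound (((hτ s).postcomp φ.hom hi hp).extEquiv (hτ s') hM hN)
  · rintro ⟨t⟩
    obtain ⟨w, hw⟩ := exists_twist_augments hM hN t
    obtain ⟨_, h⟩ := hw (Projective.factorThru w b) (Projective.factorThru_comp w b)
    exact ⟨Quot.mk _ _, Quot.sound ((hτ _).rExtEq h hM hN)⟩

end ExtSES

open ZeroObject in
lemma Resolves.twist_KP {M : Z2Cx 𝒞} {A : 𝒞} {a : M.X0 ⟶ A} (hM : M.Resolves a)
    (T : 𝒞) [Projective T] :
    (ExtSES.twist hM.d0_eq_zero rfl 0 : ExtSES M (KP 𝒞 T)).E.Resolves (biprod.desc 0 a) := by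
  have h0 := isZero_zero 𝒞
  let t : RExt 𝒞 A (0 : 𝒞) :=
    { E := A
      i := 0
      p := 𝟙 A
      w := zero_comp
      ex := (ShortComplex.Splitting.ofIsZeroOfIsIso (ShortComplex.mk (0 : 0 ⟶ A) (𝟙 A) zero_comp)
        h0 (inferInstanceAs (IsIso (𝟙 A)))).shortExact }
  have hd : (biprod.map (𝟙 T) M.d1 + biprod.snd ≫ (0 : M.X1 ⟶ T) ≫ biprod.inl) ≫
      biprod.desc (0 : T ⟶ A) a = 0 := by
    ext <;> simp [hM.d1_comp]
  have h : (ExtSES.twist hM.d0_eq_zero rfl 0 : ExtSES M (KP 𝒞 T)).Augments a (0 : T ⟶ 0) t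
      (biprod.desc 0 a) :=
    { i_comp := biprod.inl_desc _ _ |>.trans zero_comp.symm
      comp_p := by
        change biprod.desc (0 : T ⟶ A) a ≫ 𝟙 A = biprod.snd ≫ a
        ext <;> simp
      d1_comp := hd }
  exact h.resolves hM (resolves_KP T h0)

end Z2Cx

end Complexes

section GrothendieckGroup

variable {𝒞 : Type u} [SmallCategory 𝒞] [Abelian 𝒞]

lemma K0.cls_of_shortExact {X Y Z : 𝒞} {f : X ⟶ Y} {g : Y ⟶ Z} {w : f ≫ g = 0}
    (h : (ShortComplex.mk f g w).ShortExact) :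
    K0.cls 𝒞 Y = K0.cls 𝒞 X + K0.cls 𝒞 Z := by
  have hrel : FreeAbelianGroup.of Y - FreeAbelianGroup.of X - FreeAbelianGroup.of Z ∈
      AddSubgroup.closure (sesSet 𝒞) := AddSubgroup.subset_closure ⟨_, h, rfl⟩
  have hcls : K0.cls 𝒞 Y - K0.cls 𝒞 X - K0.cls 𝒞 Z = 0 :=
    (QuotientAddGroup.eq_zero_iff _).mpr hrel
  rwa [sub_sub, sub_eq_zero] at hcls

lemma K0.cls_biprod (X Y : 𝒞) : K0.cls 𝒞 (X ⊞ Y) = K0.cls 𝒞 X + K0.cls 𝒞 Y :=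
  cls_of_shortExact (ShortComplex.Splitting.ofHasBinaryBiproduct X Y).shortExact

lemma K0.cls_of_isZero {Z : 𝒞} (hZ : IsZero Z) : K0.cls 𝒞 Z = 0 := by
  have h : (ShortComplex.mk (𝟙 Z) (0 : Z ⟶ Z) comp_zero).ShortExact :=
    (ShortComplex.Splitting.ofIsIsoOfIsZero _ (inferInstanceAs (IsIso (𝟙 Z))) hZ).shortExact
  simpa only [left_eq_add] using cls_of_shortExact h

open ZeroObject in
lemma K0.cls_eq_of_iso {X Y : 𝒞} (e : X ≅ Y) : K0.cls 𝒞 X = K0.cls 𝒞 Y := by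
  have h : (ShortComplex.mk e.hom (0 : Y ⟶ 0) comp_zero).ShortExact :=
    (ShortComplex.Splitting.ofIsIsoOfIsZero _ (inferInstanceAs (IsIso e.hom))
      (isZero_zero 𝒞)).shortExact
  rw [cls_of_shortExact h, cls_of_isZero (isZero_zero 𝒞), add_zero]

end GrothendieckGroup

section Homology

variable {𝒞 : Type u} [SmallCategory 𝒞] [Abelian 𝒞]

namespace Z2Cx.Resolves

variable {M N : Z2Cx 𝒞} {A B : 𝒞} {a : M.X0 ⟶ A} {b : N.X0 ⟶ B}

lemma nonempty_H0_iso (hM : M.Resolves a) : Nonempty (H0 𝒞 M ≅ A) :=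
  have := hM.epi
  ⟨(ShortComplex.LeftHomologyData.ofIsColimitCokernelCofork
    (ShortComplex.mk M.d1 M.d0 M.d10) hM.d0_eq_zero _
      hM.shortExact.exact.gIsCokernel).homologyIso⟩

lemma isZero_H1 (hM : M.Resolves a) : IsZero (H1 𝒞 M) :=
  (ShortComplex.exact_iff_isZero_homology _).mp
    ((ShortComplex.exact_iff_mono _ hM.d0_eq_zero).mpr hM.mono_d1)

lemma finCx (hM : M.Resolves a) (hA : IsFinHom 𝒞 A) : FinCx 𝒞 M :=
  ⟨hM.projective_X0, hM.projective_X1, hA.of_iso hM.nonempty_H0_iso.some.symm,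
    isFinHom_of_isZero hM.isZero_H1⟩

lemma clsOf_eq (hM : M.Resolves a) : clsOf 𝒞 M = K0.cls 𝒞 A := by
  rw [clsOf, K0.cls_of_shortExact hM.shortExact, add_sub_cancel_left]

lemma card_hom_Hcx (hM : M.Resolves a) (hN : N.Resolves b) :
    Nat.card (Hcx 𝒞 M ⟶ Hcx 𝒞 N) = Nat.card (A ⟶ B) := by
  obtain ⟨eM⟩ := hM.nonempty_H0_iso
  obtain ⟨eN⟩ := hN.nonempty_H0_iso
  let Φ : (Hcx 𝒞 M ⟶ Hcx 𝒞 N) ≃ (H0 𝒞 M ⟶ H0 𝒞 N) :=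
    { toFun := fun φ ↦ φ.f0
      invFun := fun ψ ↦
        ⟨ψ, 0, zero_comp.trans comp_zero.symm, zero_comp.trans comp_zero.symm⟩
      left_inv := fun φ ↦ Hom.ext rfl (hM.isZero_H1.eq_of_src _ _)
      right_inv := fun _ ↦ rfl }
  exact Nat.card_congr (Φ.trans (eM.homCongr eN))

/-- As `d₀ = 0` and `d₁` is mono, the summand `C_g^†` of the decomposition is the complex of
zero objects. -/
lemma cplus_cminus_eq (hM : M.Resolves a) (dd : DecData 𝒞) :
    dd.cplus M = K0.cls 𝒞 M.X1 ∧ dd.cminus M = 0 := by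
  obtain ⟨P, Q, P', Q', f, g, -, -, -, -, -, hg, ⟨e⟩, hplus, hminus⟩ :=
    dd.spec M hM.projective_X0 hM.projective_X1
  have hD := hM.of_iso e.symm
  have hd0 : (biprod.map 0 (-g) : Q ⊞ P' ⟶ P ⊞ Q') = 0 := hD.d0_eq_zero
  have hd1 : Mono (biprod.map f (-0) : P ⊞ Q' ⟶ Q ⊞ P') := hD.mono_d1
  have hg0 : g = 0 := by
    have hcomp := biprod.inr ≫= hd0 =≫ biprod.snd
    simpa using hcomp
  have hP' : IsZero P' := IsZero.of_mono_eq_zero g hg0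
  have hQ' : IsZero Q' := by
    refine IsZero.of_mono_eq_zero (biprod.inr : Q' ⟶ P ⊞ Q') ?_
    rw [← cancel_mono (biprod.map f (-0) : P ⊞ Q' ⟶ Q ⊞ P')]
    simp
  have hX1 : K0.cls 𝒞 M.X1 = K0.cls 𝒞 (P ⊞ Q') := K0.cls_eq_of_iso (eval1.mapIso e)
  rw [hX1, K0.cls_biprod, K0.cls_of_isZero hQ', add_zero, hminus, K0.cls_of_isZero hP']
  exact ⟨hplus, rfl⟩

end Z2Cx.Resolves

lemma isFinHom_of_rExt {A B : 𝒞} (hA : IsFinHom 𝒞 A) (hB : IsFinHom 𝒞 B) (t : RExt 𝒞 A B) :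
    IsFinHom 𝒞 t.E :=
  hB.of_shortExact t.ex hA

lemma Z2Cx.ExtSES.finCx {M N : Z2Cx 𝒞} {A B : 𝒞} {a : M.X0 ⟶ A} {b : N.X0 ⟶ B}
    (s : ExtSES M N) (hM : M.Resolves a) (hN : N.Resolves b)
    (hA : IsFinHom 𝒞 A) (hB : IsFinHom 𝒞 B) : FinCx 𝒞 s.E := by
  obtain ⟨t, r, -, hr⟩ := s.exists_augments hM hN
  exact hr.finCx (isFinHom_of_rExt hA hB t)

lemma fc2c_injective : Function.Injective (fc2c 𝒞) := by
  have hrel : Equivalence (cxRel 𝒞) :=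
    ⟨fun _ ↦ ⟨Iso.refl _⟩, fun ⟨e⟩ ↦ ⟨e.symm⟩, fun ⟨e⟩ ⟨e'⟩ ↦ ⟨e ≪≫ e'⟩⟩
  rintro ⟨M⟩ ⟨N⟩ h
  exact Quot.sound ((hrel.quot_mk_eq_iff M.1 N.1).mp h)

end Homology

section LocalizedHallAlgebra

open ZeroObject

variable (S : DHSetting k R) {M N : Z2Cx R} {A B : R} {a : M.X0 ⟶ A} {b : N.X0 ⟶ B}

/-- A complex with a proof that it lies in `C_fin(P)`, as an object of `C_fin(P)`. -/
def FinCx.toFCx (h : FinCx R M) : FCx R := ⟨M, h⟩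

namespace DHSetting

/-- The power `v^x` with rational exponent, as a scalar of `DH(R)`. -/
def vpow (x : ℚ) : ℂ := ((S.v ^ ((x : ℚ) : ℝ) : ℝ) : ℂ)

/-- The class `[M•]` in `DH(R)` of a complex `M•`. -/
def cls (M : Z2Cx R) (h : FinCx R M) : S.D := S.loc (Finsupp.single (fcls R h.toFCx) 1)

lemma vpow_add (x y : ℚ) : S.vpow (x + y) = S.vpow x * S.vpow y := by
  rw [vpow, Rat.cast_add, Real.rpow_add S.v_pos, Complex.ofReal_mul, vpow, vpow]

lemma vpow_zero : S.vpow 0 = 1 := by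
  rw [vpow, Rat.cast_zero, Real.rpow_zero, Complex.ofReal_one]

lemma vpow_ne_zero (x : ℚ) : S.vpow x ≠ 0 :=
  Complex.ofReal_ne_zero.mpr (Real.rpow_pos_of_pos S.v_pos _).ne'

lemma vpow_add_div_vpow_mul (x y : ℚ) (z : ℂ) :
    S.vpow (x + y) / (S.vpow y * z) = S.vpow x / z := by
  rw [vpow_add, mul_comm (S.vpow y) z, mul_div_mul_right _ _ (S.vpow_ne_zero y)]

lemma mulH_single_single (hM : FinCx R M) (hN : FinCx R N)
    (hE : ∀ s : Z2Cx.ExtSES M N, FinCx R s.E) [Fintype (Z2Cx.ExtCl M N)] :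
    S.mulH (Finsupp.single (fcls R hM.toFCx) 1) (Finsupp.single (fcls R hN.toFCx) 1) =
      (S.vpow (S.ed.eQ (K0.cls R M.X0) (K0.cls R N.X0) +
          S.ed.eQ (K0.cls R M.X1) (K0.cls R N.X1)) / (hVal S.ed S.dd M N : ℂ)) •
        ∑ x : Z2Cx.ExtCl M N, Finsupp.single (fcls R (hE x.out).toFCx) (1 : ℂ) := by
  ext c
  have hmid (x : Z2Cx.ExtCl M N) :
      extMid R x = fc2c R c ↔ fcls R (hE x.out).toFCx = c := by
    rw [← fc2c_injective.eq_iff]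
    exact Eq.congr_left (congrArg (extMid R) (Quot.out_eq x)).symm
  have hcount : extCount R M N (fc2c R c) =
      Finset.card {x : Z2Cx.ExtCl M N | fcls R (hE x.out).toFCx = c} := by
    rw [extCount, Nat.card_congr (Equiv.subtypeEquivRight hmid), Nat.card_eq_fintype_card,
      Fintype.card_subtype]
  refine (S.mulH_single hM.toFCx hN.toFCx c).trans ?_
  change hallCoeff S.v S.ed S.dd M N (fc2c R c) = _
  rw [hallCoeff, hcount, Finsupp.smul_apply, Finsupp.finsetSum_apply]
  simp only [Finsupp.single_apply, Finset.sum_boole, smul_eq_mul, vpow]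
  push_cast
  ring

lemma mulD_KK_cls (α β : K0 R) (h : FinCx R M) :
    S.mulD (S.KK (α, β)) (S.cls M h) =
      S.vpow (sForm k R S.ed (α - β) (clsOf R M)) • S.mulD (S.cls M h) (S.KK (α, β)) :=
  S.comm_rule α β h.toFCx

lemma mulD_cls_KK_mul_cls_KK (hM : FinCx R M) (hN : FinCx R N)
    (hE : ∀ s : Z2Cx.ExtSES M N, FinCx R s.E) [Fintype (Z2Cx.ExtCl M N)] (α β α' β' : K0 R) :
    S.mulD (S.mulD (S.cls M hM) (S.KK (α, β))) (S.mulD (S.cls N hN) (S.KK (α', β'))) =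
      (S.vpow (sForm k R S.ed (α - β) (clsOf R N) + (S.ed.eQ (K0.cls R M.X0) (K0.cls R N.X0) +
          S.ed.eQ (K0.cls R M.X1) (K0.cls R N.X1))) / (hVal S.ed S.dd M N : ℂ)) •
        ∑ x : Z2Cx.ExtCl M N,
          S.mulD (S.cls x.out.E (hE x.out)) (S.KK (α + α', β + β')) := by
  refine (S.mul_general _ hN.toFCx α β α' β').trans ?_
  change S.vpow (sForm k R S.ed (α - β) (clsOf R N)) • _ = _
  rw [S.mulH_single_single hM hN hE, map_smul, map_smul, map_sum, map_sum,
    LinearMap.smul_apply, LinearMap.sum_apply, smul_smul, ← mul_div_assoc, ← vpow_add]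
  rfl

end DHSetting

namespace Z2Cx.Resolves

lemma hVal_eq (hM : M.Resolves a) (hN : N.Resolves b) :
    (hVal S.ed S.dd M N : ℂ) =
      S.vpow (2 * S.ed.eQ (K0.cls R M.X0) (K0.cls R N.X1)) * (Nat.card (A ⟶ B) : ℂ) := by
  obtain ⟨hMplus, hMminus⟩ := hM.cplus_cminus_eq S.dd
  obtain ⟨hNplus, hNminus⟩ := hN.cplus_cminus_eq S.dd
  have hmu : mu S.ed S.dd M N = S.ed.eQ (K0.cls R M.X0) (K0.cls R N.X1) := by
    rw [mu, hMplus, hMminus, hNplus, hNminus]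
    simp only [sub_zero, sub_self, map_zero, AddMonoidHom.zero_apply, add_zero]
  rw [hVal, hM.card_hom_Hcx hN, hmu, ← S.v_sq, ← Real.rpow_natCast, ← Real.rpow_mul S.v_pos.le,
    DHSetting.vpow]
  push_cast
  rfl

lemma Eelt_eq (hM : M.Resolves a) (h : FinCx R M) :
    Eelt S M h = S.vpow (-S.ed.eQ (K0.cls R A) (K0.cls R M.X1)) •
      S.mulD (S.cls M h) (S.KK (-K0.cls R M.X1, 0)) := by
  obtain ⟨hplus, hminus⟩ := hM.cplus_cminus_eq S.dd
  have hexp : S.ed.eQ (K0.cls R M.X1 - 0) (K0.cls R A) +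
      sForm k R S.ed (-K0.cls R M.X1 - 0) (K0.cls R A) =
        -S.ed.eQ (K0.cls R A) (K0.cls R M.X1) := by
    simp only [sForm, sub_zero, map_neg, AddMonoidHom.neg_apply, add_neg_cancel_left]
  change S.vpow _ • S.mulD _ (S.cls M h) = _
  rw [S.mulD_KK_cls, smul_smul, hplus, hminus, hM.clsOf_eq, neg_zero, ← DHSetting.vpow_add, hexp]

lemma Eelt_eq_of_iso (hN : N.Resolves b) (e : M ≅ N) (h : FinCx R M) (h' : FinCx R N) :
    Eelt S M h = Eelt S N h' := by
  have hcls : S.cls M h = S.cls N h' :=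
    congrArg (fun c ↦ S.loc (Finsupp.single c 1)) (Quot.sound ⟨e⟩)
  have hX1 : K0.cls R M.X1 = K0.cls R N.X1 := K0.cls_eq_of_iso (eval1.mapIso e)
  rw [(hN.of_iso e).Eelt_eq S h, hN.Eelt_eq S h', hcls, hX1]

lemma mulD_exponent_eq (hM : M.Resolves a) (hN : N.Resolves b) :
    -S.ed.eQ (K0.cls R A) (K0.cls R M.X1) + -S.ed.eQ (K0.cls R B) (K0.cls R N.X1) +
        (sForm k R S.ed (-K0.cls R M.X1 - 0) (K0.cls R B) +
          (S.ed.eQ (K0.cls R M.X0) (K0.cls R N.X0) + S.ed.eQ (K0.cls R M.X1) (K0.cls R N.X1))) =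
      S.ed.eQ (K0.cls R A) (K0.cls R B) +
        -S.ed.eQ (K0.cls R B + K0.cls R A) (K0.cls R N.X1 + K0.cls R M.X1) +
        2 * S.ed.eQ (K0.cls R M.X0) (K0.cls R N.X1) := by
  rw [← hM.clsOf_eq, ← hN.clsOf_eq]
  simp only [sForm, clsOf, map_add, map_sub, map_neg, AddMonoidHom.add_apply,
    AddMonoidHom.sub_apply, AddMonoidHom.neg_apply, sub_zero]
  ring

end Z2Cx.Resolves

namespace DHSetting

lemma mulD_Eelt (hM : M.Resolves a) (hN : N.Resolves b) (hA : IsFinHom R A) (hB : IsFinHom R B)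
    [Fintype (Z2Cx.ExtCl M N)] :
    S.mulD (Eelt S M (hM.finCx hA)) (Eelt S N (hN.finCx hB)) =
      (S.vpow (S.ed.eQ (K0.cls R A) (K0.cls R B)) / (Nat.card (A ⟶ B) : ℂ)) •
        ∑ x : Z2Cx.ExtCl M N, Eelt S x.out.E (x.out.finCx hM hN hA hB) := by
  have hE (s : Z2Cx.ExtSES M N) : Eelt S s.E (s.finCx hM hN hA hB) =
      S.vpow (-S.ed.eQ (K0.cls R B + K0.cls R A) (K0.cls R N.X1 + K0.cls R M.X1)) •
        S.mulD (S.cls s.E (s.finCx hM hN hA hB))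
          (S.KK (-K0.cls R M.X1 + -K0.cls R N.X1, 0 + 0)) := by
    obtain ⟨t, r, -, hr⟩ := s.exists_augments hM hN
    have hX1 : K0.cls R s.E.X1 = K0.cls R N.X1 + K0.cls R M.X1 := K0.cls_of_shortExact s.ex1
    rw [hr.Eelt_eq S, K0.cls_of_shortExact t.ex, hX1, neg_add_rev, add_zero]
  simp only [hE, ← Finset.smul_sum]
  rw [hM.Eelt_eq S, hN.Eelt_eq S, map_smul, map_smul, LinearMap.smul_apply,
    S.mulD_cls_KK_mul_cls_KK _ _ (fun s ↦ s.finCx hM hN hA hB), hN.clsOf_eq, hM.hVal_eq S hN,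
    smul_smul, smul_smul, smul_smul, mul_comm (S.vpow _) (S.vpow _), ← vpow_add, ← mul_div_assoc,
    ← vpow_add, hM.mulD_exponent_eq S hN, vpow_add_div_vpow_mul, vpow_add, div_mul_eq_mul_div]

lemma Eelt_KP (T : R) [Projective T] (h : FinCx R (Z2Cx.KP R T)) :
    Eelt S (Z2Cx.KP R T) h = S.one := by
  have hcls : S.cls (Z2Cx.KP R T) h = S.KK (K0.cls R T, 0) := S.KK_P T ‹_› h
  have hadd : ((K0.cls R T, 0) + (-K0.cls R T, 0) : K0 R × K0 R) = 0 := by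
    rw [Prod.mk_add_mk, add_neg_cancel, add_zero]; rfl
  rw [(Z2Cx.resolves_KP T (isZero_zero R)).Eelt_eq S, hcls, K0.cls_of_isZero (isZero_zero R)]
  change S.vpow (-S.ed.eQ 0 (K0.cls R T)) • S.mulD _ (S.KK (-K0.cls R T, 0)) = _
  rw [S.KK_mul, hadd, S.KK_zero, map_zero, AddMonoidHom.zero_apply, neg_zero, vpow_zero, one_smul]

lemma Eelt_eq_of_ext_KP (hM : M.Resolves a) (hA : IsFinHom R A) {T : R} [Projective T]
    (s : Z2Cx.ExtSES M (Z2Cx.KP R T)) (h : FinCx R M) (h' : FinCx R s.E) :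
    Eelt S M h = Eelt S s.E h' := by
  have h0 := isZero_zero R
  have hK := Z2Cx.resolves_KP T h0
  have hfin : IsFinHom R (0 : R) := isFinHom_of_isZero h0
  obtain ⟨Φ, -⟩ := Z2Cx.ExtSES.exists_extCl_equiv hM hK
  obtain ⟨ω, hω⟩ := Z2Cx.ExtSES.exists_injective_rExtCl hM hK
  have (X : R) : Subsingleton (X ⟶ (0 : R)) := ⟨fun _ _ ↦ h0.eq_of_tgt _ _⟩
  have : Subsingleton (Z2Cx.ExtCl M (Z2Cx.KP R T)) := (hω.comp Φ.injective).subsingleton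
  have : Fintype (Z2Cx.ExtCl M (Z2Cx.KP R T)) := Fintype.ofSubsingleton (Quot.mk _ s)
  let x : Z2Cx.ExtCl M (Z2Cx.KP R T) := Quot.mk _ s
  obtain ⟨e, -⟩ := (extEquiv_equivalence _ _).quot_mk_eq_iff _ _ |>.mp x.out_eq
  obtain ⟨t, r, -, hr⟩ := s.exists_augments hM hK
  calc Eelt S M h = S.mulD (Eelt S M h) (Eelt S (Z2Cx.KP R T) (hK.finCx hfin)) := by
        rw [Eelt_KP, S.mul_one]
    _ = Eelt S x.out.E (x.out.finCx hM hK hA hfin) := by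
        rw [S.mulD_Eelt hM hK hA hfin, K0.cls_of_isZero h0, map_zero, vpow_zero,
          Nat.card_of_subsingleton 0, Nat.cast_one, div_one, one_smul,
          Fintype.sum_subsingleton _ x]
    _ = Eelt S s.E h' := hr.Eelt_eq_of_iso S e _ _

end DHSetting

lemma Z2Cx.Resolves.Eelt_eq_Eelt {b : N.X0 ⟶ A} (hM : M.Resolves a) (hN : N.Resolves b)
    (hA : IsFinHom R A) (h : FinCx R M) (h' : FinCx R N) : Eelt S M h = Eelt S N h' := by
  have := hM.projective_X0
  have := hN.projective_X0
  have := hM.epi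
  have := hN.epi
  have hM' := hM.twist_KP N.X0
  have hN' := hN.twist_KP M.X0
  obtain ⟨e, he⟩ := exists_biprod_iso_of_projective_covers a b
  obtain ⟨φ⟩ := hM'.nonempty_iso hN' e he
  rw [S.Eelt_eq_of_ext_KP hM hA _ h (hM'.finCx hA), S.Eelt_eq_of_ext_KP hN hA _ h' (hN'.finCx hA)]
  exact hN'.Eelt_eq_of_iso S φ _ _

end LocalizedHallAlgebra

section Resolutions

variable (S : DHSetting k R) {rP rQ : R → R} (rf : ∀ C : R, rP C ⟶ rQ C)

/-- The element `E_C` of `DH(R)` attached to an isomorphism class `c` of objects `C` by means of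
the chosen resolutions; the junk value `0` is never attained on classes of objects of `A`. -/
def rclsEelt (c : RCls R) : S.D :=
  if h : FinCx R (Z2Cx.Cf R (rf (Quot.out c))) then Eelt S (Z2Cx.Cf R (rf (Quot.out c))) h else 0

variable {rf} {rπ : ∀ C : R, rQ C ⟶ C}

lemma rclsEelt_rcls (hL : ∀ C : R, IsFinHom R C → (Z2Cx.Cf R (rf C)).Resolves (rπ C)) {C : R}
    (hC : IsFinHom R C) {M : Z2Cx R} {r : M.X0 ⟶ C} (hM : M.Resolves r) (h : FinCx R M) :
    rclsEelt S rf (rcls R C) = Eelt S M h := by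
  have hiso : Equivalence (fun X Y : R ↦ Nonempty (X ≅ Y)) :=
    ⟨fun _ ↦ ⟨Iso.refl _⟩, fun ⟨e⟩ ↦ ⟨e.symm⟩, fun ⟨e⟩ ⟨e'⟩ ↦ ⟨e ≪≫ e'⟩⟩
  obtain ⟨e⟩ := hiso.quot_mk_eq_iff _ _ |>.mp (rcls R C).out_eq
  have hC' : IsFinHom R (rcls R C).out := hC.of_iso e.symm
  rw [rclsEelt, dif_pos ((hL _ hC').finCx hC')]
  exact ((hL _ hC').comp_iso e).Eelt_eq_Eelt S hM hC _ h

lemma mulD_Eelt_eq_sum_rclsEelt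
    (hL : ∀ C : R, IsFinHom R C → (Z2Cx.Cf R (rf C)).Resolves (rπ C)) {A B : R}
    (hA : IsFinHom R A) (hB : IsFinHom R B) [Fintype (RExtCl R A B)] :
    S.mulD (Eelt S (Z2Cx.Cf R (rf A)) ((hL A hA).finCx hA))
        (Eelt S (Z2Cx.Cf R (rf B)) ((hL B hB).finCx hB)) =
      (S.vpow (S.ed.eQ (K0.cls R A) (K0.cls R B)) / (Nat.card (A ⟶ B) : ℂ)) •
        ∑ y : RExtCl R A B, rclsEelt S rf (rExtMid R y) := by
  have hM := hL A hA
  have hN := hL B hB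
  obtain ⟨Φ, hΦ⟩ := Z2Cx.ExtSES.exists_extCl_equiv hM hN
  have : Fintype (Z2Cx.ExtCl (Z2Cx.Cf R (rf A)) (Z2Cx.Cf R (rf B))) := Fintype.ofEquiv _ Φ.symm
  have hmid (x : Z2Cx.ExtCl (Z2Cx.Cf R (rf A)) (Z2Cx.Cf R (rf B))) :
      rclsEelt S rf (rExtMid R (Φ x)) = Eelt S x.out.E (x.out.finCx hM hN hA hB) := by
    obtain ⟨t, r, ht, h⟩ := hΦ x.out
    rw [← Quot.out_eq x, ht, Quot.out_eq x]
    exact rclsEelt_rcls S hL (isFinHom_of_rExt hA hB t) (h.resolves hM hN) _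
  rw [S.mulD_Eelt hM hN hA hB, ← Φ.sum_comp]
  simp only [hmid]

end Resolutions

theorem stmt12_general (S : DHSetting k R)
    (rP rQ : R → R) (rf : ∀ C : R, rP C ⟶ rQ C) (rπ : ∀ C : R, rQ C ⟶ C)
    (hres : ∀ C : R, IsFinHom R C → Projective (rP C) ∧ Projective (rQ C) ∧
      ∃ w : rf C ≫ rπ C = 0, (ShortComplex.mk (rf C) (rπ C) w).ShortExact)
    (hfc : ∀ C : R, IsFinHom R C → FinCx R (Z2Cx.Cf R (rf C)))
    (A B : R) (hA : IsFinHom R A) (hB : IsFinHom R B) :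
    S.mulD (Eelt S (Z2Cx.Cf R (rf A)) (hfc A hA)) (Eelt S (Z2Cx.Cf R (rf B)) (hfc B hB)) =
      ∑ᶠ c : RCls R,
        ((((S.v ^ ((S.ed.eQ (K0.cls R A) (K0.cls R B) : ℚ) : ℝ) : ℝ) : ℂ) *
            (rExtCount R A B c : ℂ) / (Nat.card (A ⟶ B) : ℂ)) •
          (if h : FinCx R (Z2Cx.Cf R (rf (Quot.out c))) then
            Eelt S (Z2Cx.Cf R (rf (Quot.out c))) h else 0)) := by
  have hL (C : R) (hC : IsFinHom R C) : (Z2Cx.Cf R (rf C)).Resolves (rπ C) := by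
    obtain ⟨_, _, _, hex⟩ := hres C hC
    exact Z2Cx.resolves_Cf hex
  obtain ⟨ω, hω⟩ := Z2Cx.ExtSES.exists_injective_rExtCl (hL A hA) (hL B hB)
  have : Finite ((Z2Cx.Cf R (rf A)).X1 ⟶ B) := hB _
  have : Finite (RExtCl R A B) := Finite.of_injective ω hω
  have : Fintype (RExtCl R A B) := Fintype.ofFinite _
  rw [mulD_Eelt_eq_sum_rclsEelt S hL hA hB, ← finsum_card_fiber_smul, smul_finsum]
  refine finsum_congr fun c ↦ ?_
  rw [← Nat.cast_smul_eq_nsmul ℂ, smul_smul, div_mul_eq_mul_div]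
  rfl

theorem stmt12 (hH : Hereditary k R) (hc : CondC R) (hd : CondD R) (he : CondE R)
    (S : DHSetting k R)
    -- a fixed choice of projective resolution `0 → P_C → Q_C → C → 0` for each object
    (rP rQ : R → R) (rf : ∀ C : R, rP C ⟶ rQ C) (rπ : ∀ C : R, rQ C ⟶ C)
    (hres : ∀ C : R, IsFinHom R C → Projective (rP C) ∧ Projective (rQ C) ∧
      ∃ w : rf C ≫ rπ C = 0, (ShortComplex.mk (rf C) (rπ C) w).ShortExact)
    (hfc : ∀ C : R, IsFinHom R C → FinCx R (Z2Cx.Cf R (rf C)))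
    (A B : R) (hA : IsFinHom R A) (hB : IsFinHom R B) :
    S.mulD (Eelt S (Z2Cx.Cf R (rf A)) (hfc A hA)) (Eelt S (Z2Cx.Cf R (rf B)) (hfc B hB)) =
      ∑ᶠ c : RCls R,
        ((((S.v ^ ((S.ed.eQ (K0.cls R A) (K0.cls R B) : ℚ) : ℝ) : ℝ) : ℂ) *
            (rExtCount R A B c : ℂ) / (Nat.card (A ⟶ B) : ℂ)) •
          (if h : FinCx R (Z2Cx.Cf R (rf (Quot.out c))) then
            Eelt S (Z2Cx.Cf R (rf (Quot.out c))) h else 0)) :=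
  stmt12_general S rP rQ rf rπ hres hfc A B hA hB

end
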